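/- arXiv:2408.08476 — 4 statements merged into one kernel-verified Lean document; each statement's English description precedes it below -/
import Mathlib

section
/- Let Σ ∈ ℝ^{n×n} and R ∈ ℝ^{m×m} be symmetric positive definite, H ∈ ℝ^{m×n}, and fix y ∈ ℝᵐ. Set S := HΣHᵀ + R, K := ΣHᵀS⁻¹, C := (I − KH)Σ. Let X : Ω → ℝⁿ and η : Ω → ℝᵐ be independent random vectors on a probability space (Ω, 𝓕, P) such that the law of X has Lebesgue density x ↦ φ_Σ(x − m₀) and the law of η has Lebesgue density φ_R. Then the random vector Xᵃ := X + K(y − HX − η) has law with Lebesgue density x ↦ φ_C(x − μ), where μ := m₀ + K(y − Hm₀). -/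
open Matrix Real MeasureTheory ProbabilityTheory

/-- Centered Gaussian density on `ℝᵏ` with covariance matrix `Q`:
`φ_Q(u) = (2π)^(-k/2) (det Q)^(-1/2) exp(-(1/2) uᵀ Q⁻¹ u)`. -/
noncomputable def gaussianDensity {k : ℕ} (Q : Matrix (Fin k) (Fin k) ℝ)
    (u : Fin k → ℝ) : ℝ :=
  (2 * π) ^ (-(k : ℝ) / 2) * Q.det ^ (-(1 : ℝ) / 2) *
    Real.exp (-(1 / 2) * (u ⬝ᵥ Q⁻¹ *ᵥ u))

/-!
The analysis member `X + K(y - HX - η) = (I - KH)X + Ky - Kη` is an affine combination of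
independent Gaussian vectors, hence Gaussian, with mean `m₀ + K(y - Hm₀)` and covariance in Joseph
form `(I - KH)Σ(I - KH)ᵀ + KRKᵀ`, whatever the matrix `K`. The Kalman gain satisfies
`K(HΣHᵀ + R) = ΣHᵀ`, that is `KR = (I - KH)ΣHᵀ`, and this collapses the Joseph form to `(I - KH)Σ`.
Positive definiteness of the latter follows from `det (I - KH) = det R / det (HΣHᵀ + R)`. The
densities come from the standard Gaussian through the substitution `x = Q^(1/2) u + μ`.
-/

open WithLp
open scoped RealInnerProductSpace MatrixOrder

lemma posSemidef_mul_mul_transpose_same {ι κ : Type*} [Fintype ι] [Finite κ]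
    {S : Matrix ι ι ℝ} (hS : S.PosSemidef) (A : Matrix κ ι ℝ) : (A * S * Aᵀ).PosSemidef := by
  simpa only [conjTranspose_eq_transpose_of_trivial] using hS.mul_mul_conjTranspose_same A

/-- `K` is a Kalman gain for the forecast covariance `Sig`, the observation covariance `R` and the
observation matrix `H`. The normal equation replaces the formula `K = ΣHᵀ(HΣHᵀ + R)⁻¹`, so that the
innovation covariance `HΣHᵀ + R` may be singular. -/
def IsKalmanGain {𝕜 ι κ : Type*} [CommRing 𝕜] [Fintype ι] [Fintype κ] (Sig : Matrix ι ι 𝕜)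
    (R : Matrix κ κ 𝕜) (H : Matrix κ ι 𝕜) (K : Matrix ι κ 𝕜) : Prop :=
  K * (H * Sig * Hᵀ + R) = Sig * Hᵀ

namespace IsKalmanGain

variable {ι κ : Type*} [Fintype ι] [Fintype κ] [DecidableEq ι]

lemma joseph_form {𝕜 : Type*} [CommRing 𝕜] {Sig : Matrix ι ι 𝕜} {R : Matrix κ κ 𝕜}
    {H : Matrix κ ι 𝕜} {K : Matrix ι κ 𝕜} (hK : IsKalmanGain Sig R H K) :
    (1 - K * H) * Sig * (1 - K * H)ᵀ + K * R * Kᵀ = (1 - K * H) * Sig := by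
  have hKR : K * R = (1 - K * H) * Sig * Hᵀ := by
    rw [IsKalmanGain, Matrix.mul_add, ← eq_sub_iff_add_eq'] at hK
    simp only [hK, Matrix.sub_mul, Matrix.one_mul, Matrix.mul_assoc]
  rw [hKR, transpose_sub, transpose_one, transpose_mul, Matrix.mul_sub, Matrix.mul_one]
  simp only [Matrix.mul_assoc, sub_add_cancel]

lemma det_one_sub_mul_mul_det {𝕜 : Type*} [CommRing 𝕜] [DecidableEq κ]
    {Sig : Matrix ι ι 𝕜} {R : Matrix κ κ 𝕜} {H : Matrix κ ι 𝕜} {K : Matrix ι κ 𝕜}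
    (hK : IsKalmanGain Sig R H K) :
    (1 - K * H).det * (H * Sig * Hᵀ + R).det = R.det := by
  have hR : (1 - H * K) * (H * Sig * Hᵀ + R) = R := by
    rw [Matrix.sub_mul, Matrix.mul_assoc H K, hK, Matrix.one_mul, ← Matrix.mul_assoc,
      add_sub_cancel_left]
  rw [det_one_sub_mul_comm, ← det_mul, hR]

lemma posDef_one_sub_mul_mul {Sig : Matrix ι ι ℝ} {R : Matrix κ κ ℝ}
    {H : Matrix κ ι ℝ} {K : Matrix ι κ ℝ} (hSig : Sig.PosDef) (hR : R.PosDef)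
    (hK : IsKalmanGain Sig R H K) : ((1 - K * H) * Sig).PosDef := by
  classical
  have hdet : (1 - K * H).det ≠ 0 := left_ne_zero_of_mul <|
    hK.det_one_sub_mul_mul_det.trans_ne hR.det_pos.ne'
  rw [← hK.joseph_form, ← conjTranspose_eq_transpose_of_trivial (1 - K * H)]
  refine PosDef.add_posSemidef (hSig.mul_mul_conjTranspose_same ?_)
    (posSemidef_mul_mul_transpose_same hR.posSemidef K)
  exact vecMul_injective_of_isUnit ((isUnit_iff_isUnit_det _).2 hdet.isUnit)

end IsKalmanGain

section Gaussian

lemma charFun_map_linearMap {E F : Type*}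
    [NormedAddCommGroup E] [InnerProductSpace ℝ E] [FiniteDimensional ℝ E] [MeasurableSpace E]
    [BorelSpace E] [NormedAddCommGroup F] [InnerProductSpace ℝ F] [FiniteDimensional ℝ F]
    [MeasurableSpace F] [BorelSpace F] (μ : Measure E) (L : E →ₗ[ℝ] F) (t : F) :
    charFun (μ.map L) t = charFun μ (L.adjoint t) := by
  rw [charFun_apply, charFun_apply,
    integral_map L.continuous_of_finiteDimensional.aemeasurable (by fun_prop)]
  simp only [LinearMap.adjoint_inner_right]

variable {ι κ : Type*} [Fintype ι] [Fintype κ] [DecidableEq ι] [DecidableEq κ]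

lemma multivariateGaussian_map_add_const {S : Matrix ι ι ℝ} (hS : S.PosSemidef)
    (μ b : EuclideanSpace ℝ ι) :
    (multivariateGaussian μ S).map (· + b) = multivariateGaussian (μ + b) S := by
  have := Measure.isProbabilityMeasure_map (μ := multivariateGaussian μ S) (f := (· + b))
    (by fun_prop)
  refine Measure.ext_of_charFun (funext fun t => ?_)
  rw [charFun_map_add_const, charFun_multivariateGaussian hS, charFun_multivariateGaussian hS,
    ← Complex.exp_add, inner_add_right, real_inner_comm b t]
  push_cast
  congr 1
  ring

lemma multivariateGaussian_map_toEuclideanLin {S : Matrix ι ι ℝ} (hS : S.PosSemidef)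
    (A : Matrix κ ι ℝ) (μ : EuclideanSpace ℝ ι) :
    (multivariateGaussian μ S).map A.toEuclideanLin =
      multivariateGaussian (A.toEuclideanLin μ) (A * S * Aᵀ) := by
  have hASA := posSemidef_mul_mul_transpose_same hS A
  have := Measure.isProbabilityMeasure_map (μ := multivariateGaussian μ S)
    A.toEuclideanLin.continuous_of_finiteDimensional.aemeasurable
  refine Measure.ext_of_charFun (funext fun t => ?_)
  have hquad : (Aᵀ *ᵥ ofLp t) ⬝ᵥ S *ᵥ (Aᵀ *ᵥ ofLp t) = ofLp t ⬝ᵥ (A * S * Aᵀ) *ᵥ ofLp t := by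
    rw [mulVec_transpose, ← dotProduct_mulVec, ← mulVec_transpose, mulVec_mulVec, mulVec_mulVec,
      Matrix.mul_assoc]
  rw [charFun_map_linearMap, charFun_multivariateGaussian hS, charFun_multivariateGaussian hASA,
    LinearMap.adjoint_inner_left, ← toEuclideanLin_conjTranspose_eq_adjoint, ofLp_toLpLin,
    toLin'_apply, conjTranspose_eq_transpose_of_trivial, hquad]

lemma multivariateGaussian_conv_multivariateGaussian {S T : Matrix ι ι ℝ} (hS : S.PosSemidef)
    (hT : T.PosSemidef) (μ ν : EuclideanSpace ℝ ι) :
    multivariateGaussian μ S ∗ multivariateGaussian ν T = multivariateGaussian (μ + ν) (S + T) := by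
  refine Measure.ext_of_charFun (funext fun t => ?_)
  rw [charFun_conv, charFun_multivariateGaussian hS, charFun_multivariateGaussian hT,
    charFun_multivariateGaussian (hS.add hT), ← Complex.exp_add, inner_add_right, add_mulVec,
    dotProduct_add]
  push_cast
  congr 1
  ring

variable {Ω : Type*} {mΩ : MeasurableSpace Ω} {P : Measure Ω}

lemma hasLaw_toEuclideanLin_add_const {S : Matrix ι ι ℝ} (hS : S.PosSemidef)
    {μ : EuclideanSpace ℝ ι} {X : Ω → EuclideanSpace ℝ ι}
    (hX : HasLaw X (multivariateGaussian μ S) P) (A : Matrix κ ι ℝ) (b : EuclideanSpace ℝ κ) :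
    HasLaw (fun ω => A.toEuclideanLin (X ω) + b)
      (multivariateGaussian (A.toEuclideanLin μ + b) (A * S * Aᵀ)) P := by
  have hASA := posSemidef_mul_mul_transpose_same hS A
  have hA : HasLaw A.toEuclideanLin (multivariateGaussian (A.toEuclideanLin μ) (A * S * Aᵀ))
      (multivariateGaussian μ S) :=
    ⟨A.toEuclideanLin.continuous_of_finiteDimensional.aemeasurable,
      multivariateGaussian_map_toEuclideanLin hS A μ⟩
  have hb : HasLaw (· + b) (multivariateGaussian (A.toEuclideanLin μ + b) (A * S * Aᵀ))
      (multivariateGaussian (A.toEuclideanLin μ) (A * S * Aᵀ)) :=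
    ⟨by fun_prop, multivariateGaussian_map_add_const hASA _ b⟩
  exact hb.comp (hA.comp hX)

lemma hasLaw_enkf_analysis
    {Sig : Matrix ι ι ℝ} {R : Matrix κ κ ℝ} (hSig : Sig.PosSemidef) (hR : R.PosSemidef)
    {m₀ : EuclideanSpace ℝ ι} {X : Ω → EuclideanSpace ℝ ι} {η : Ω → EuclideanSpace ℝ κ}
    (hX : HasLaw X (multivariateGaussian m₀ Sig) P) (hη : HasLaw η (multivariateGaussian 0 R) P)
    (hindep : IndepFun X η P) (H : Matrix κ ι ℝ) (K : Matrix ι κ ℝ) (y : EuclideanSpace ℝ κ) :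
    HasLaw (fun ω => X ω + K.toEuclideanLin (y - H.toEuclideanLin (X ω) - η ω))
      (multivariateGaussian (m₀ + K.toEuclideanLin (y - H.toEuclideanLin m₀))
        ((1 - K * H) * Sig * (1 - K * H)ᵀ + K * R * Kᵀ)) P := by
  have hdecomp : ∀ x e, x + K.toEuclideanLin (y - H.toEuclideanLin x - e) =
      ((1 - K * H).toEuclideanLin x + K.toEuclideanLin y) + ((-K).toEuclideanLin e + 0) := by
    intro x e
    have hKH : (K * H).toEuclideanLin x = K.toEuclideanLin (H.toEuclideanLin x) := by
      simp
    have hone : (1 : Matrix ι ι ℝ).toEuclideanLin x = x := by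
      simp
    simp only [map_sub, map_neg, LinearMap.sub_apply, LinearMap.neg_apply, hKH, hone]
    abel
  have hcov : (-K) * R * (-K)ᵀ = K * R * Kᵀ := by
    rw [transpose_neg, Matrix.neg_mul, Matrix.neg_mul, Matrix.mul_neg, neg_neg]
  have hmean := hdecomp m₀ 0
  rw [sub_zero] at hmean
  have hstate := hasLaw_toEuclideanLin_add_const hSig hX (1 - K * H) (K.toEuclideanLin y)
  have hnoise := hasLaw_toEuclideanLin_add_const hR hη (-K) 0
  have hindep' := hindep.comp
    (φ := fun x => (1 - K * H).toEuclideanLin x + K.toEuclideanLin y)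
    (ψ := fun e => (-K).toEuclideanLin e + 0)
    ((LinearMap.continuous_of_finiteDimensional _).add_const _).measurable
    ((LinearMap.continuous_of_finiteDimensional _).add_const _).measurable
  have hsum := hindep'.hasLaw_fun_add hstate hnoise
  rw [multivariateGaussian_conv_multivariateGaussian (posSemidef_mul_mul_transpose_same hSig _)
    (posSemidef_mul_mul_transpose_same hR _), hcov, ← hmean] at hsum
  simpa only [hdecomp] using hsum

theorem enkf_analysis_exactness_general
    {Sig : Matrix ι ι ℝ} {R : Matrix κ κ ℝ} (hSig : Sig.PosSemidef) (hR : R.PosSemidef)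
    {H : Matrix κ ι ℝ} {K : Matrix ι κ ℝ} (hK : IsKalmanGain Sig R H K)
    (y : EuclideanSpace ℝ κ) {m₀ : EuclideanSpace ℝ ι}
    {X : Ω → EuclideanSpace ℝ ι} {η : Ω → EuclideanSpace ℝ κ} (hindep : IndepFun X η P)
    (hX : HasLaw X (multivariateGaussian m₀ Sig) P)
    (hη : HasLaw η (multivariateGaussian 0 R) P) :
    HasLaw (fun ω => X ω + K.toEuclideanLin (y - H.toEuclideanLin (X ω) - η ω))
      (multivariateGaussian (m₀ + K.toEuclideanLin (y - H.toEuclideanLin m₀))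
        ((1 - K * H) * Sig)) P := by
  rw [← hK.joseph_form]
  exact hasLaw_enkf_analysis hSig hR hX hη hindep H K y

end Gaussian

section Density

lemma map_withDensity_comp {α β : Type*} {mα : MeasurableSpace α} {mβ : MeasurableSpace β}
    (μ : Measure α) {g : α → β} (hg : Measurable g) {f : β → ENNReal} (hf : Measurable f) :
    (μ.withDensity (f ∘ g)).map g = (μ.map g).withDensity f := by
  ext s hs
  rw [Measure.map_apply hg hs, withDensity_apply _ (hg hs), withDensity_apply _ hs,
    setLIntegral_map hs hf hg]
  rfl

lemma pi_withDensity_ofReal {ι : Type*} [Fintype ι] {α : ι → Type*}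
    {mα : ∀ i, MeasurableSpace (α i)} (μ : ∀ i, Measure (α i)) [∀ i, SigmaFinite (μ i)]
    {f : ∀ i, α i → ℝ} (hf : ∀ i, Integrable (f i) (μ i)) (hf₀ : ∀ i, 0 ≤ f i) :
    Measure.pi (fun i => (μ i).withDensity fun x => ENNReal.ofReal (f i x)) =
      (Measure.pi μ).withDensity fun x => ENNReal.ofReal (∏ i, f i (x i)) := by
  have : ∀ i, IsFiniteMeasure ((μ i).withDensity fun x => ENNReal.ofReal (f i x)) := fun i =>
    isFiniteMeasure_withDensity_ofReal (hf i).2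
  refine Measure.pi_eq fun s hs => ?_
  rw [withDensity_apply _ (MeasurableSet.univ_pi hs), Measure.restrict_pi_pi,
    ← ofReal_integral_eq_lintegral_ofReal (Integrable.fintype_prod_dep fun i => (hf i).restrict)
      (.of_forall fun x => Finset.prod_nonneg fun i _ => hf₀ i (x i)),
    integral_fintype_prod_eq_prod, ENNReal.ofReal_prod_of_nonneg fun i _ =>
      integral_nonneg (hf₀ i)]
  refine Finset.prod_congr rfl fun i _ => ?_
  rw [withDensity_apply _ (hs i), ofReal_integral_eq_lintegral_ofReal (hf i).restrict
    (.of_forall (hf₀ i))]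

lemma map_mulVec_add_const_volume {ι : Type*} [Fintype ι] [DecidableEq ι] {A : Matrix ι ι ℝ}
    (hA : A.det ≠ 0) (b : ι → ℝ) :
    (volume : Measure (ι → ℝ)).map (fun x => A *ᵥ x + b) = ENNReal.ofReal |A.det|⁻¹ • volume := by
  have hcomp : (fun x => A *ᵥ x + b) = (· + b) ∘ toLin' A := rfl
  rw [hcomp, ← Measure.map_map (by fun_prop)
      (LinearMap.continuous_of_finiteDimensional _).measurable,
    Real.map_matrix_volume_pi_eq_smul_volume_pi hA, Measure.map_smul, map_add_right_eq_self,
    abs_inv]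

variable {k : ℕ}

lemma continuous_gaussianDensity (Q : Matrix (Fin k) (Fin k) ℝ) :
    Continuous (gaussianDensity Q) := by
  unfold gaussianDensity
  fun_prop

lemma gaussianDensity_one_eq_prod (u : Fin k → ℝ) :
    gaussianDensity 1 u = ∏ i, gaussianPDFReal 0 1 (u i) := by
  simp only [gaussianDensity, gaussianPDFReal]
  have hnorm : (√(2 * π * ((1 : NNReal) : ℝ)))⁻¹ ^ k = (2 * π) ^ (-(k : ℝ) / 2) := by
    rw [NNReal.coe_one, mul_one, Real.sqrt_eq_rpow, ← Real.rpow_neg (by positivity),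
      ← Real.rpow_mul_natCast (by positivity)]
    ring_nf
  have hexp : -(1 / 2) * (u ⬝ᵥ u) = ∑ i, -(u i - 0) ^ 2 / (2 * ((1 : NNReal) : ℝ)) := by
    rw [dotProduct, Finset.mul_sum]
    exact Finset.sum_congr rfl fun i _ => by rw [NNReal.coe_one]; ring
  rw [Finset.prod_mul_distrib, ← Real.exp_sum, Finset.prod_const, Finset.card_univ,
    Fintype.card_fin, hnorm, ← hexp, det_one, Real.one_rpow, inv_one, one_mulVec, mul_one]

lemma pi_gaussianReal_eq_withDensity :
    Measure.pi (fun _ : Fin k => gaussianReal 0 1) =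
      volume.withDensity fun u => ENNReal.ofReal (gaussianDensity 1 u) := by
  simp only [gaussianDensity_one_eq_prod]
  simp only [gaussianReal_of_var_ne_zero 0 one_ne_zero]
  exact pi_withDensity_ofReal _ (fun _ => integrable_gaussianPDFReal 0 1) fun _ =>
    gaussianPDFReal_nonneg 0 1

lemma gaussianDensity_eq_abs_det_mul {Q A : Matrix (Fin k) (Fin k) ℝ} (hQ : 0 ≤ Q.det)
    (hA : A.det ≠ 0) (u : Fin k → ℝ) :
    gaussianDensity Q u = |A.det| * gaussianDensity (A * Q * Aᵀ) (A *ᵥ u) := by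
  have hdet : |A.det| * (A * Q * Aᵀ).det ^ (-(1 : ℝ) / 2) = Q.det ^ (-(1 : ℝ) / 2) := by
    have hexponent : ((2 : ℕ) : ℝ) * (-1 / 2) = -1 := by norm_num
    rw [det_mul, det_mul, det_transpose, mul_right_comm, ← pow_two, ← sq_abs,
      Real.mul_rpow (by positivity) hQ, ← Real.rpow_natCast_mul (by positivity), ← mul_assoc,
      hexponent, Real.rpow_neg_one, mul_inv_cancel₀ (abs_ne_zero.2 hA), one_mul]
  have hquad : (A *ᵥ u) ⬝ᵥ (A * Q * Aᵀ)⁻¹ *ᵥ (A *ᵥ u) = u ⬝ᵥ Q⁻¹ *ᵥ u := by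
    have hcancel : Aᵀ * (A * Q * Aᵀ)⁻¹ * A = Q⁻¹ := by
      have hAt : IsUnit Aᵀ.det := by rwa [det_transpose, isUnit_iff_ne_zero]
      rw [Matrix.mul_inv_rev, Matrix.mul_inv_rev, ← Matrix.mul_assoc, mul_nonsing_inv _ hAt,
        Matrix.one_mul, nonsing_inv_mul_cancel_right _ _ hA.isUnit]
    rw [← hcancel, ← mulVec_mulVec, ← mulVec_mulVec, dotProduct_mulVec u, vecMul_transpose]
  rw [gaussianDensity, gaussianDensity, hquad, ← hdet]
  ring

lemma withDensity_gaussianDensity_map_mulVec_add_const {Q A : Matrix (Fin k) (Fin k) ℝ}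
    (hQ : 0 ≤ Q.det) (hA : A.det ≠ 0) (b : Fin k → ℝ) :
    (volume.withDensity fun x => ENNReal.ofReal (gaussianDensity Q x)).map
        (fun x => A *ᵥ x + b) =
      volume.withDensity fun x => ENNReal.ofReal (gaussianDensity (A * Q * Aᵀ) (x - b)) := by
  set f : (Fin k → ℝ) → ENNReal :=
    fun x => ENNReal.ofReal (gaussianDensity (A * Q * Aᵀ) (x - b)) with hf
  set g : (Fin k → ℝ) → (Fin k → ℝ) := fun x => A *ᵥ x + b with hg
  have hf_meas : Measurable f := by
    have := continuous_gaussianDensity (A * Q * Aᵀ)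
    fun_prop
  have hg_meas : Measurable g := by
    have : Continuous g := by fun_prop
    exact this.measurable
  have hfactor : (fun x => ENNReal.ofReal (gaussianDensity Q x)) =
      ENNReal.ofReal |A.det| • (f ∘ g) := by
    ext x
    rw [gaussianDensity_eq_abs_det_mul hQ hA, ENNReal.ofReal_mul (abs_nonneg _), Pi.smul_apply,
      Function.comp_apply, smul_eq_mul, hf, hg]
    simp only [add_sub_cancel_right]
  rw [hfactor, withDensity_smul _ (hf_meas.comp hg_meas), Measure.map_smul,
    map_withDensity_comp _ hg_meas hf_meas, map_mulVec_add_const_volume hA,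
    withDensity_smul_measure, smul_smul, ← ENNReal.ofReal_mul (abs_nonneg _),
    mul_inv_cancel₀ (abs_ne_zero.2 hA), ENNReal.ofReal_one, one_smul]

lemma map_ofLp_multivariateGaussian {Q : Matrix (Fin k) (Fin k) ℝ} (hQ : Q.PosDef)
    (μ : EuclideanSpace ℝ (Fin k)) :
    (multivariateGaussian μ Q).map ofLp =
      volume.withDensity fun x => ENNReal.ofReal (gaussianDensity Q (x - ofLp μ)) := by
  set B := CFC.sqrt Q
  have hBB : B * B = Q := CFC.sqrt_mul_sqrt_self Q hQ.posSemidef.nonneg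
  have hBt : Bᵀ = B := by
    rw [← conjTranspose_eq_transpose_of_trivial]
    exact (CFC.sqrt_nonneg Q).isSelfAdjoint
  have hB : B.det ≠ 0 := by
    refine left_ne_zero_of_mul (b := B.det) ?_
    rw [← det_mul, hBB]
    exact hQ.det_pos.ne'
  have hpush : (multivariateGaussian μ Q).map ofLp =
      (Measure.pi fun _ => gaussianReal 0 1).map fun x => B *ᵥ x + ofLp μ := by
    rw [multivariateGaussian, ← map_pi_eq_stdGaussian, Measure.map_map (by fun_prop) (by fun_prop),
      Measure.map_map (by fun_prop) (by fun_prop)]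
    congr 1
    ext x : 1
    simp [B, add_comm]
  rw [hpush, pi_gaussianReal_eq_withDensity,
    withDensity_gaussianDensity_map_mulVec_add_const (by simp) hB, Matrix.mul_one, hBt, hBB]

lemma hasLaw_toLp_multivariateGaussian_iff {Q : Matrix (Fin k) (Fin k) ℝ} (hQ : Q.PosDef)
    (μ : Fin k → ℝ) {Ω : Type*} {mΩ : MeasurableSpace Ω} {P : Measure Ω} {X : Ω → (Fin k → ℝ)} :
    HasLaw (fun ω => toLp 2 (X ω)) (multivariateGaussian (toLp 2 μ) Q) P ↔
      HasLaw X (volume.withDensity fun x => ENNReal.ofReal (gaussianDensity Q (x - μ))) P := by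
  have hofLp : MeasurePreserving (MeasurableEquiv.toLp 2 (Fin k → ℝ)).symm
      (multivariateGaussian (toLp 2 μ) Q)
      (volume.withDensity fun x => ENNReal.ofReal (gaussianDensity Q (x - μ))) :=
    ⟨MeasurableEquiv.measurable _, map_ofLp_multivariateGaussian hQ (toLp 2 μ)⟩
  exact ⟨hofLp.fun_comp_hasLaw, hofLp.symm.fun_comp_hasLaw⟩

end Density

/-- **Exactness of the stochastic ensemble Kalman filter analysis step.** If the forecast
member `X` has Gaussian density `φ_Σ(· - m₀)`, the perturbation `η` has density `φ_R`, and
`X` and `η` are independent, then the analysis member `Xᵃ = X + K(y - HX - η)`, with Kalman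
gain `K = ΣHᵀ(HΣHᵀ + R)⁻¹`, has exactly the Gaussian posterior density `φ_C(· - μ)` with
`μ = m₀ + K(y - Hm₀)` and `C = (I - KH)Σ`. -/
theorem enkf_analysis_exactness
    (n m : ℕ)
    (Sig : Matrix (Fin n) (Fin n) ℝ) (R : Matrix (Fin m) (Fin m) ℝ)
    (H : Matrix (Fin m) (Fin n) ℝ)
    (hSig : Sig.PosDef) (hR : R.PosDef)
    (y : Fin m → ℝ) (m₀ : Fin n → ℝ)
    (S : Matrix (Fin m) (Fin m) ℝ) (hS : S = H * Sig * Hᵀ + R)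
    (K : Matrix (Fin n) (Fin m) ℝ) (hK : K = Sig * Hᵀ * S⁻¹)
    (C : Matrix (Fin n) (Fin n) ℝ) (hC : C = (1 - K * H) * Sig)
    (Ω : Type*) [MeasurableSpace Ω] (P : Measure Ω) [IsProbabilityMeasure P]
    (X : Ω → (Fin n → ℝ)) (η : Ω → (Fin m → ℝ))
    (hX : Measurable X) (hη : Measurable η)
    (hindep : IndepFun X η P)
    (hlawX : P.map X = volume.withDensity (fun x => ENNReal.ofReal (gaussianDensity Sig (x - m₀))))
    (hlawη : P.map η = volume.withDensity (fun u => ENNReal.ofReal (gaussianDensity R u))) :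
    P.map (fun ω => X ω + K *ᵥ (y - H *ᵥ X ω - η ω)) =
      volume.withDensity
        (fun x => ENNReal.ofReal (gaussianDensity C (x - (m₀ + K *ᵥ (y - H *ᵥ m₀))))) := by
  have hSdet : IsUnit S.det := by
    have hSpos := PosDef.posSemidef_add (posSemidef_mul_mul_transpose_same hSig.posSemidef H) hR
    exact hS ▸ hSpos.det_pos.ne'.isUnit
  have hgain : IsKalmanGain Sig R H K := by
    rw [IsKalmanGain, ← hS, hK, nonsing_inv_mul_cancel_right _ _ hSdet]
  have hCpos : C.PosDef := hC ▸ hgain.posDef_one_sub_mul_mul hSig hR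
  have hX' := (hasLaw_toLp_multivariateGaussian_iff hSig m₀).2 ⟨hX.aemeasurable, hlawX⟩
  have hη' := (hasLaw_toLp_multivariateGaussian_iff hR 0).2
    ⟨hη.aemeasurable, by simpa only [sub_zero] using hlawη⟩
  have hindep' := hindep.comp (measurable_toLp 2 (Fin n → ℝ)) (measurable_toLp 2 (Fin m → ℝ))
  have hXa := enkf_analysis_exactness_general hSig.posSemidef hR.posSemidef hgain (toLp 2 y)
    hindep' hX' hη'
  rw [← hC] at hXa
  exact ((hasLaw_toLp_multivariateGaussian_iff hCpos _).1 hXa).map_eq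
end

section
/- Let (Ω, 𝓕, P) be a probability space and let X : Ω → S, Z : Ω → T, W : Ω → U be random variables into standard Borel spaces S, T, U. If X is conditionally independent of W given Z, then for P∘W⁻¹-almost every w ∈ U, the regular conditional distribution of X given W satisfies condDistrib(X | W)(w) = ∫_T condDistrib(X | Z)(z) d[condDistrib(Z | W)(w)](z), i.e., the conditional law of X given W = w is the composition (bind) of the conditional law of Z given W = w with the Markov kernel z ↦ conditional law of X given Z = z. -/
open MeasureTheory ProbabilityTheory

/-!
Conditional independence says that the conditional law of `X` given the pair `(W, Z)` depends on
`Z` only, i.e. it is the kernel `z ↦ condDistrib X Z P z` pulled back along the second projection.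
Composing it with the conditional law of `Z` given `W` yields the conditional law of `(Z, X)` given
`W`; its second marginal is the asserted composition, and conditional laws are a.e. unique.
-/

section HasCondDistrib

variable {Ω S T U : Type*} {mΩ : MeasurableSpace Ω} {mS : MeasurableSpace S}
  {mT : MeasurableSpace T} {mU : MeasurableSpace U} {P : Measure Ω}
  {X : Ω → S} {Z : Ω → T} {W : Ω → U}

theorem hasCondDistrib_condDistrib [StandardBorelSpace S] [Nonempty S] [IsFiniteMeasure P]
    (hX : AEMeasurable X P) (hW : AEMeasurable W P) :
    HasCondDistrib X W (condDistrib X W P) P where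
  map_eq := (compProd_map_condDistrib hX).symm

theorem condDistrib_ae_eq_of_hasCondDistrib [StandardBorelSpace S] [Nonempty S]
    [IsFiniteMeasure P] {κ : Kernel U S} [IsFiniteKernel κ] (h : HasCondDistrib X W κ P) :
    condDistrib X W P =ᵐ[P.map W] κ :=
  condDistrib_ae_eq_of_measure_eq_compProd W h.aemeasurable_snd h.map_eq

theorem hasCondDistrib_prodMk_compProd {κ : Kernel U T} {η : Kernel (U × T) S}
    (hZ : HasCondDistrib Z W κ P) (hX : HasCondDistrib X (fun ω ↦ (W ω, Z ω)) η P) :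
    HasCondDistrib (fun ω ↦ (Z ω, X ω)) W (κ ⊗ₖ η) P where
  aemeasurable := by fun_prop
  map_eq := calc
    P.map (fun ω ↦ (W ω, Z ω, X ω))
    _ = (P.map fun ω ↦ ((W ω, Z ω), X ω)).map MeasurableEquiv.prodAssoc := by
      rw [AEMeasurable.map_map_of_aemeasurable (by fun_prop) (by fun_prop)]
      rfl
    _ = (P.map W ⊗ₘ κ ⊗ₘ η).map MeasurableEquiv.prodAssoc := by rw [hX.map_eq, hZ.map_eq]
    _ = P.map W ⊗ₘ (κ ⊗ₖ η) := Measure.compProd_assoc'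

theorem hasCondDistrib_comp_of_prodMkLeft [SFinite P] {κ : Kernel U T} [IsSFiniteKernel κ]
    {η : Kernel T S} [IsSFiniteKernel η] (hZ : HasCondDistrib Z W κ P)
    (hX : HasCondDistrib X (fun ω ↦ (W ω, Z ω)) (η.prodMkLeft U) P) :
    HasCondDistrib X W (η ∘ₖ κ) P := by
  simpa only [Kernel.snd_compProd_prodMkLeft] using (hasCondDistrib_prodMk_compProd hZ hX).snd

end HasCondDistrib

section CondIndepFun

variable {Ω S T U : Type*} [MeasurableSpace Ω] [StandardBorelSpace Ω]
  [MeasurableSpace S] [StandardBorelSpace S] [Nonempty S] [MeasurableSpace T] [MeasurableSpace U]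
  {P : Measure Ω} [IsFiniteMeasure P] {X : Ω → S} {Z : Ω → T} {W : Ω → U}

theorem setLIntegral_condDistrib_of_condIndepFun
    (hX : Measurable X) (hZ : Measurable Z) (hW : Measurable W)
    (hCI : CondIndepFun (MeasurableSpace.comap Z inferInstance) hZ.comap_le X W P)
    {A : Set U} {B : Set T} {C : Set S}
    (hA : MeasurableSet A) (hB : MeasurableSet B) (hC : MeasurableSet C) :
    ∫⁻ ω in W ⁻¹' A ∩ Z ⁻¹' B, condDistrib X Z P (Z ω) C ∂P
      = P (W ⁻¹' A ∩ Z ⁻¹' B ∩ X ⁻¹' C) := by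
  -- Passing from `W` to the event `W ∈ A` replaces `U` by the standard Borel space `Prop`.
  let V : Ω → Prop := fun ω ↦ W ω ∈ A
  have hV : Measurable V := hA.mem.comp hW
  have hZV : Measurable fun ω ↦ (Z ω, V ω) := hZ.prodMk hV
  have hVX : CondIndepFun (MeasurableSpace.comap Z inferInstance) hZ.comap_le V X P :=
    (hCI.comp measurable_id hA.mem).symm
  have h_drop : ∀ᵐ ω ∂P,
      condDistrib X (fun ω ↦ (Z ω, V ω)) P (Z ω, V ω) = condDistrib X Z P (Z ω) :=
    ae_of_ae_map hZV.aemeasurable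
      ((condIndepFun_iff_condDistrib_prod_ae_eq_prodMkRight hX hV hZ).1 hVX)
  have h_event : W ⁻¹' A ∩ Z ⁻¹' B = (fun ω ↦ (Z ω, V ω)) ⁻¹' (B ×ˢ {True}) := by
    ext ω
    simp [V, and_comm]
  calc ∫⁻ ω in W ⁻¹' A ∩ Z ⁻¹' B, condDistrib X Z P (Z ω) C ∂P
    _ = ∫⁻ ω in W ⁻¹' A ∩ Z ⁻¹' B, condDistrib X (fun ω ↦ (Z ω, V ω)) P (Z ω, V ω) C ∂P :=
      lintegral_congr_ae <| ae_restrict_of_ae <| h_drop.mono fun ω hω ↦ by simp only [hω]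
    _ = P (W ⁻¹' A ∩ Z ⁻¹' B ∩ X ⁻¹' C) := by
      rw [h_event]
      exact setLIntegral_preimage_condDistrib hZV hX.aemeasurable hC
        (hB.prod (measurableSet_singleton True))

theorem hasCondDistrib_prodMkLeft_of_condIndepFun
    (hX : Measurable X) (hZ : Measurable Z) (hW : Measurable W)
    (hCI : CondIndepFun (MeasurableSpace.comap Z inferInstance) hZ.comap_le X W P) :
    HasCondDistrib X (fun ω ↦ (W ω, Z ω)) ((condDistrib X Z P).prodMkLeft U) P where
  map_eq := by
    refine Measure.ext_prod₃_iff'.2 fun {A B C} hA hB hC ↦ ?_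
    calc P.map (fun ω ↦ ((W ω, Z ω), X ω)) ((A ×ˢ B) ×ˢ C)
      _ = P (W ⁻¹' A ∩ Z ⁻¹' B ∩ X ⁻¹' C) :=
        Measure.map_apply (by fun_prop) ((hA.prod hB).prod hC)
      _ = ∫⁻ ω in W ⁻¹' A ∩ Z ⁻¹' B, condDistrib X Z P (Z ω) C ∂P :=
        (setLIntegral_condDistrib_of_condIndepFun hX hZ hW hCI hA hB hC).symm
      _ = ∫⁻ p in A ×ˢ B, condDistrib X Z P p.2 C ∂P.map fun ω ↦ (W ω, Z ω) :=
        (setLIntegral_map (hA.prod hB) ((Kernel.measurable_coe _ hC).comp measurable_snd)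
          (hW.prodMk hZ)).symm
      _ = (P.map (fun ω ↦ (W ω, Z ω)) ⊗ₘ (condDistrib X Z P).prodMkLeft U) ((A ×ˢ B) ×ˢ C) := by
        simp only [Measure.compProd_apply_prod (hA.prod hB) hC, Kernel.prodMkLeft_apply]

theorem condDistrib_bind_of_condIndepFun_general [StandardBorelSpace T] [Nonempty T]
    (hX : Measurable X) (hZ : Measurable Z) (hW : Measurable W)
    (hCI : CondIndepFun (MeasurableSpace.comap Z inferInstance) hZ.comap_le X W P) :
    ∀ᵐ w ∂(P.map W),
      condDistrib X W P w = (condDistrib Z W P w).bind (fun z => condDistrib X Z P z) := by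
  have hZW : HasCondDistrib Z W (condDistrib Z W P) P :=
    hasCondDistrib_condDistrib hZ.aemeasurable hW.aemeasurable
  have hXW : HasCondDistrib X W (condDistrib X Z P ∘ₖ condDistrib Z W P) P :=
    hasCondDistrib_comp_of_prodMkLeft hZW (hasCondDistrib_prodMkLeft_of_condIndepFun hX hZ hW hCI)
  filter_upwards [condDistrib_ae_eq_of_hasCondDistrib hXW] with w hw
  rw [hw, Kernel.comp_apply]

end CondIndepFun

/-- **Chapman–Kolmogorov / prediction decomposition.** If `X` is conditionally independent of
`W` given `Z`, then for `P ∘ W⁻¹`-almost every `w` the conditional law of `X` given `W = w` is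
the composition (bind) of the conditional law of `Z` given `W = w` with the Markov kernel
`z ↦` conditional law of `X` given `Z = z`:
`condDistrib X W P w = ∫ condDistrib X Z P z d(condDistrib Z W P w)(z)`. -/
theorem condDistrib_bind_of_condIndepFun
    {Ω S T U : Type*}
    [MeasurableSpace Ω] [StandardBorelSpace Ω] [Nonempty Ω]
    [MeasurableSpace S] [StandardBorelSpace S] [Nonempty S]
    [MeasurableSpace T] [StandardBorelSpace T] [Nonempty T]
    [MeasurableSpace U] [StandardBorelSpace U] [Nonempty U]
    (P : Measure Ω) [IsProbabilityMeasure P]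
    (X : Ω → S) (Z : Ω → T) (W : Ω → U)
    (hX : Measurable X) (hZ : Measurable Z) (hW : Measurable W)
    (hCI : CondIndepFun (MeasurableSpace.comap Z inferInstance) hZ.comap_le X W P) :
    ∀ᵐ w ∂(P.map W),
      condDistrib X W P w = (condDistrib Z W P w).bind (fun z => condDistrib X Z P z) :=
  condDistrib_bind_of_condIndepFun_general hX hZ hW hCI
end

section
/- Let (Ω, 𝓕, P) be a probability space, X : Ω → S and Y : Ω → T random variables with S, T standard Borel spaces, let ν be a σ-finite measure on T, and let g : S × T → [0, ∞) be jointly measurable such that for P∘X⁻¹-almost every x, the regular conditional distribution of Y given X = x equals ν.withDensity(g(x, ·)) (so g is the conditional density of Y given X with respect to ν). Then the law of Y is absolutely continuous with respect to ν with density y ↦ ∫_S g(x, y) d(P∘X⁻¹)(x), and for P∘Y⁻¹-almost every y ∈ T with 0 < ∫_S g(x, y) d(P∘X⁻¹)(x) < ∞, the regular conditional distribution of X given Y = y equals (P∘X⁻¹).withDensity( x ↦ g(x, y) / ∫_S g(x', y) d(P∘X⁻¹)(x') ). -/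
open MeasureTheory ProbabilityTheory
open scoped ENNReal

/-!
A kernel with densities `g (x, ·)` with respect to `ν` makes `g` the density of the joint law of
`(X, Y)` with respect to the product of the prior and `ν`. Bayes' theorem is then the
factorization `f (a, b) = h a * (f (a, b) / h a)` of a joint density, with `h a = ∫ f (a, b) db`.
It holds almost everywhere: where `h a = 0`, almost every `f (a, b)` vanishes, and `h a = ∞` only
on a null set because `f` has finite mass.
-/

section Density

variable {α β : Type*} [MeasurableSpace α] [MeasurableSpace β]
  {μ : Measure α} {ν : Measure β} {f : α × β → ℝ≥0∞}

/-- The density with respect to `μ` of the first marginal of the measure with density `f` with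
respect to `μ.prod ν`. In Bayes' theorem it is the evidence, with `ν` the prior. -/
noncomputable def marginalDensity (ν : Measure β) (f : α × β → ℝ≥0∞) (a : α) : ℝ≥0∞ :=
  ∫⁻ b, f (a, b) ∂ν

/-- The conditional law of the second coordinate given the first under a joint density `f`, as the
kernel with density `f (a, ·) / marginalDensity ν f a` with respect to `ν`. With the conventions of
`ℝ≥0∞`, it has total mass `0`, not `1`, at the points where the marginal density is `0` or `∞`. -/
noncomputable def condDensityKernel (ν : Measure β) [SFinite ν] (f : α × β → ℝ≥0∞) : Kernel α β :=
  (Kernel.const α ν).withDensity fun a b => f (a, b) / marginalDensity ν f a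

theorem measurable_marginalDensity [SFinite ν] (hf : Measurable f) :
    Measurable (marginalDensity ν f) :=
  hf.lintegral_prod_right'

theorem measurable_div_marginalDensity [SFinite ν] (hf : Measurable f) :
    Measurable fun p : α × β => f p / marginalDensity ν f p.1 :=
  hf.div ((measurable_marginalDensity hf).comp measurable_fst)

theorem condDensityKernel_apply [SFinite ν] (hf : Measurable f) (a : α) :
    condDensityKernel ν f a = ν.withDensity fun b => f (a, b) / marginalDensity ν f a := by
  rw [condDensityKernel, Kernel.withDensity_apply _ (measurable_div_marginalDensity hf),
    Kernel.const_apply]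

theorem isFiniteKernel_condDensityKernel [SFinite ν] (hf : Measurable f) :
    IsFiniteKernel (condDensityKernel ν f) := by
  refine ⟨1, ENNReal.one_lt_top, fun a => ?_⟩
  rw [condDensityKernel_apply hf, withDensity_apply _ .univ, Measure.restrict_univ]
  have hfa : Measurable fun b => f (a, b) := hf.comp measurable_prodMk_left
  simp only [div_eq_mul_inv]
  rw [lintegral_mul_const _ hfa]
  exact ENNReal.div_self_le_one

theorem compProd_eq_withDensity_prod [SFinite μ] [SFinite ν] {κ : Kernel α β} [IsSFiniteKernel κ]
    (hf : Measurable f) (hκ : ∀ᵐ a ∂μ, κ a = ν.withDensity fun b => f (a, b)) :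
    μ ⊗ₘ κ = (μ.prod ν).withDensity f := by
  ext s hs
  rw [Measure.compProd_apply hs, withDensity_apply _ hs, ← lintegral_indicator hs,
    lintegral_prod _ (hf.indicator hs).aemeasurable]
  refine lintegral_congr_ae ?_
  filter_upwards [hκ] with a ha
  have hsa : MeasurableSet (Prod.mk a ⁻¹' s) := measurable_prodMk_left hs
  rw [ha, withDensity_apply _ hsa, ← lintegral_indicator hsa]
  rfl

theorem fst_withDensity_prod [SFinite μ] [SFinite ν] (hf : Measurable f) :
    ((μ.prod ν).withDensity f).fst = μ.withDensity (marginalDensity ν f) := by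
  ext s hs
  rw [Measure.fst_apply hs, withDensity_apply _ (measurable_fst hs), withDensity_apply _ hs,
    ← Set.prod_univ, setLIntegral_prod _ hf.aemeasurable.restrict]
  simp only [Measure.restrict_univ, marginalDensity]

theorem map_swap_withDensity_prod [SFinite μ] [SFinite ν] (hf : Measurable f) :
    ((μ.prod ν).withDensity f).map Prod.swap =
      (ν.prod μ).withDensity fun p => f p.swap := by
  ext s hs
  have hf_swap : Measurable fun p : β × α => f p.swap := hf.comp measurable_swap
  rw [Measure.map_apply measurable_swap hs, withDensity_apply _ (measurable_swap hs),
    withDensity_apply _ hs,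
    ← Measure.measurePreserving_swap.setLIntegral_comp_preimage hs hf_swap]
  simp only [Prod.swap_swap]

theorem ae_marginalDensity_ne_top [SFinite ν] (hf : Measurable f)
    (hfin : ∫⁻ p, f p ∂μ.prod ν ≠ ∞) : ∀ᵐ a ∂μ, marginalDensity ν f a ≠ ∞ := by
  rw [lintegral_prod _ hf.aemeasurable] at hfin
  exact (ae_lt_top (measurable_marginalDensity hf) hfin).mono fun _ => LT.lt.ne

theorem ae_marginalDensity_pos_and_ne_top [SFinite ν] (hf : Measurable f)
    (hfin : ∫⁻ p, f p ∂μ.prod ν ≠ ∞) :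
    ∀ᵐ a ∂μ.withDensity (marginalDensity ν f),
      0 < marginalDensity ν f a ∧ marginalDensity ν f a ≠ ∞ := by
  rw [ae_withDensity_iff (measurable_marginalDensity hf)]
  filter_upwards [ae_marginalDensity_ne_top hf hfin] with a htop hzero
  exact ⟨pos_iff_ne_zero.2 hzero, htop⟩

theorem marginalDensity_mul_div_ae_eq [SFinite ν] (hf : Measurable f)
    (hfin : ∫⁻ p, f p ∂μ.prod ν ≠ ∞) :
    (fun p : α × β => marginalDensity ν f p.1 * (f p / marginalDensity ν f p.1))
      =ᵐ[μ.prod ν] f := by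
  have hmeas : Measurable fun p : α × β =>
      marginalDensity ν f p.1 * (f p / marginalDensity ν f p.1) :=
    ((measurable_marginalDensity hf).comp measurable_fst).mul (measurable_div_marginalDensity hf)
  refine (Measure.ae_prod_iff_ae_ae (measurableSet_eq_fun hmeas hf)).2 ?_
  filter_upwards [ae_marginalDensity_ne_top hf hfin] with a htop
  by_cases hzero : marginalDensity ν f a = 0
  · have hfa : ∀ᵐ b ∂ν, f (a, b) = 0 :=
      (lintegral_eq_zero_iff (hf.comp measurable_prodMk_left)).1 hzero
    filter_upwards [hfa] with b hb
    rw [hb, ENNReal.zero_div, mul_zero]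
  · exact .of_forall fun b => ENNReal.mul_div_cancel hzero htop

theorem withDensity_compProd_condDensityKernel [SFinite μ] [SFinite ν] (hf : Measurable f)
    (hfin : ∫⁻ p, f p ∂μ.prod ν ≠ ∞) :
    μ.withDensity (marginalDensity ν f) ⊗ₘ condDensityKernel ν f = (μ.prod ν).withDensity f := by
  have := isFiniteKernel_condDensityKernel (ν := ν) hf
  have hh : Measurable (marginalDensity ν f) := measurable_marginalDensity hf
  have hdiv : Measurable fun p : α × β => f p / marginalDensity ν f p.1 :=
    measurable_div_marginalDensity hf
  calc μ.withDensity (marginalDensity ν f) ⊗ₘ condDensityKernel ν f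
    _ = ((μ.withDensity (marginalDensity ν f)).prod ν).withDensity
          (fun p => f p / marginalDensity ν f p.1) :=
      compProd_eq_withDensity_prod hdiv (.of_forall (condDensityKernel_apply hf))
    _ = ((μ.prod ν).withDensity fun p => marginalDensity ν f p.1).withDensity
          (fun p => f p / marginalDensity ν f p.1) := by
      rw [prod_withDensity_left hh]
    _ = (μ.prod ν).withDensity
          (fun p => marginalDensity ν f p.1 * (f p / marginalDensity ν f p.1)) :=
      (withDensity_mul _ (hh.comp measurable_fst) hdiv).symm
    _ = (μ.prod ν).withDensity f := withDensity_congr_ae (marginalDensity_mul_div_ae_eq hf hfin)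

end Density

section JointDensity

variable {Ω α β : Type*} [MeasurableSpace Ω] [MeasurableSpace α] [MeasurableSpace β]
  {P : Measure Ω} {U : Ω → α} {V : Ω → β} {μ : Measure α} {ν : Measure β} {f : α × β → ℝ≥0∞}

theorem map_eq_withDensity_marginalDensity [SFinite μ] [SFinite ν] (hV : AEMeasurable V P)
    (hf : Measurable f)
    (hjoint : P.map (fun ω => (U ω, V ω)) = (μ.prod ν).withDensity f) :
    P.map U = μ.withDensity (marginalDensity ν f) := by
  rw [← Measure.fst_map_prodMk₀ hV, hjoint, fst_withDensity_prod hf]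

theorem lintegral_ne_top_of_map_eq_withDensity {γ : Type*} [MeasurableSpace γ] {W : Ω → γ}
    {ρ : Measure γ} {φ : γ → ℝ≥0∞} [IsFiniteMeasure P] (hW : P.map W = ρ.withDensity φ) :
    ∫⁻ c, φ c ∂ρ ≠ ∞ := by
  rw [← setLIntegral_univ, ← withDensity_apply _ .univ, ← hW]
  exact measure_ne_top _ _

theorem condDistrib_ae_eq_condDensityKernel [StandardBorelSpace β] [Nonempty β]
    [IsFiniteMeasure P] [SFinite μ] [SFinite ν] (hV : AEMeasurable V P) (hf : Measurable f)
    (hjoint : P.map (fun ω => (U ω, V ω)) = (μ.prod ν).withDensity f) :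
    condDistrib V U P =ᵐ[P.map U] condDensityKernel ν f := by
  have := isFiniteKernel_condDensityKernel (ν := ν) hf
  apply condDistrib_ae_eq_of_measure_eq_compProd U hV
  rw [hjoint, map_eq_withDensity_marginalDensity hV hf hjoint,
    withDensity_compProd_condDensityKernel hf (lintegral_ne_top_of_map_eq_withDensity hjoint)]

theorem map_prodMk_eq_withDensity_of_condDistrib [StandardBorelSpace β] [Nonempty β]
    [IsFiniteMeasure P] [SFinite ν] (hV : AEMeasurable V P) (hf : Measurable f)
    (hcond : ∀ᵐ a ∂P.map U, condDistrib V U P a = ν.withDensity fun b => f (a, b)) :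
    P.map (fun ω => (U ω, V ω)) = ((P.map U).prod ν).withDensity f := by
  rw [← compProd_map_condDistrib hV, compProd_eq_withDensity_prod hf hcond]

end JointDensity

theorem bayes_theorem_dominated_general
    {Ω S T : Type*}
    [MeasurableSpace Ω]
    [MeasurableSpace S] [StandardBorelSpace S] [Nonempty S]
    [MeasurableSpace T] [StandardBorelSpace T] [Nonempty T]
    (P : Measure Ω) [IsFiniteMeasure P]
    (X : Ω → S) (Y : Ω → T)
    (hX : AEMeasurable X P) (hY : AEMeasurable Y P)
    (ν : Measure T) [SFinite ν]
    (g : S × T → ℝ≥0∞) (hg : Measurable g)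
    (hlik : ∀ᵐ x ∂(P.map X), condDistrib Y X P x = ν.withDensity (fun y => g (x, y))) :
    P.map Y = ν.withDensity (fun y => ∫⁻ x, g (x, y) ∂(P.map X)) ∧
    ∀ᵐ y ∂(P.map Y),
      (0 < ∫⁻ x, g (x, y) ∂(P.map X) ∧ ∫⁻ x, g (x, y) ∂(P.map X) ≠ ⊤) ∧
        condDistrib X Y P y =
          (P.map X).withDensity (fun x => g (x, y) / ∫⁻ x', g (x', y) ∂(P.map X)) := by
  have hg_swap : Measurable fun p : T × S => g p.swap := hg.comp measurable_swap
  have hjoint : P.map (fun ω => (Y ω, X ω)) =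
      (ν.prod (P.map X)).withDensity fun p => g p.swap := by
    rw [← map_swap_withDensity_prod hg, ← map_prodMk_eq_withDensity_of_condDistrib hY hg hlik,
      AEMeasurable.map_map_of_aemeasurable measurable_swap.aemeasurable (hX.prodMk hY)]
    rfl
  have hlaw : P.map Y = ν.withDensity (marginalDensity (P.map X) fun p => g p.swap) :=
    map_eq_withDensity_marginalDensity hX hg_swap hjoint
  have hevidence := ae_marginalDensity_pos_and_ne_top hg_swap
    (lintegral_ne_top_of_map_eq_withDensity hjoint)
  rw [← hlaw] at hevidence
  refine ⟨hlaw, ?_⟩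
  filter_upwards [hevidence, condDistrib_ae_eq_condDensityKernel hX hg_swap hjoint]
    with y hy hcond
  exact ⟨hy, hcond.trans (condDensityKernel_apply hg_swap y)⟩

/-- **Bayes' theorem for dominated likelihoods.** If the conditional law of `Y` given `X = x`
has density `g (x, ·)` with respect to a σ-finite measure `ν`, then the law of `Y` has density
`y ↦ ∫ g (x, y) d(P∘X⁻¹)(x)` with respect to `ν`, and for almost every `y` with
`0 < ∫ g (x, y) d(P∘X⁻¹)(x) < ∞` the conditional law of `X` given `Y = y` has density
`x ↦ g (x, y) / ∫ g (x', y) d(P∘X⁻¹)(x')` with respect to the law of `X`. -/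
theorem bayes_theorem_dominated
    {Ω S T : Type*}
    [MeasurableSpace Ω]
    [MeasurableSpace S] [StandardBorelSpace S] [Nonempty S]
    [MeasurableSpace T] [StandardBorelSpace T] [Nonempty T]
    (P : Measure Ω) [IsProbabilityMeasure P]
    (X : Ω → S) (Y : Ω → T)
    (hX : Measurable X) (hY : Measurable Y)
    (ν : Measure T) [SigmaFinite ν]
    (g : S × T → ℝ≥0∞) (hg : Measurable g)
    (hlik : ∀ᵐ x ∂(P.map X), condDistrib Y X P x = ν.withDensity (fun y => g (x, y))) :
    P.map Y = ν.withDensity (fun y => ∫⁻ x, g (x, y) ∂(P.map X)) ∧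
    ∀ᵐ y ∂(P.map Y),
      (0 < ∫⁻ x, g (x, y) ∂(P.map X) ∧ ∫⁻ x, g (x, y) ∂(P.map X) ≠ ⊤) →
        condDistrib X Y P y =
          (P.map X).withDensity (fun x => g (x, y) / ∫⁻ x', g (x', y) ∂(P.map X)) := by
  obtain ⟨hlaw, hpost⟩ :=
    bayes_theorem_dominated_general P X Y hX.aemeasurable hY.aemeasurable ν g hg hlik
  exact ⟨hlaw, hpost.mono fun _ h _ => h.2⟩
end

section
/- Let (Ω, 𝓕, P) be a probability space and X : Ω → S, Y : Ω → T, W : Ω → U random variables into standard Borel spaces. Let ν be a σ-finite measure on T and g : S × T → [0, ∞) jointly measurable, and assume that for P∘(X, W)⁻¹-almost every (x, w), the regular conditional distribution of Y given (X, W) = (x, w) equals ν.withDensity(g(x, ·)) (in particular it does not depend on w, so Y is conditionally independent of W given X with conditional density g). Then for P∘(Y, W)⁻¹-almost every (y, w) with 0 < ∫_S g(x, y) d[condDistrib(X | W)(w)](x) < ∞, the regular conditional distribution of X given (Y, W) = (y, w) equals [condDistrib(X | W)(w)].withDensity( x ↦ g(x, y) / ∫_S g(x', y) d[condDistrib(X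 | W)(w)](x') ). -/
open MeasureTheory ProbabilityTheory
open scoped ENNReal

/-! Bayes' rule is a disintegration of a density. If `ρ` has density `f` with respect to `m ⊗ₘ κ`,
then its first marginal has density `Z a = ∫ f a dκ a` with respect to `m`, and writing
`f = Z * (f / Z)` splits `ρ` into this marginal and the kernel with density `f / Z` with respect to
`κ`. In the filtering step, the law of `((Y, W), X)` has density `g (x, y)` with respect to
`(ν ⊗ law of W) ⊗ₘ condDistrib X W P`. -/

section Disintegration

variable {α β : Type*} [MeasurableSpace α] [MeasurableSpace β]

open Classical in
/-- The density `f a` divided by its total mass under `κ a`, so that it becomes a probability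
density. Where that mass is `0` or `∞` it is replaced by the constant `1`, so that reweighting a
Markov kernel always gives a Markov kernel. -/
noncomputable def normalizedDensity (κ : Kernel α β) (f : α → β → ℝ≥0∞) (a : α) (b : β) : ℝ≥0∞ :=
  if 0 < ∫⁻ b', f a b' ∂κ a ∧ ∫⁻ b', f a b' ∂κ a ≠ ∞ then f a b / ∫⁻ b', f a b' ∂κ a else 1

lemma measurable_normalizedDensity {κ : Kernel α β} [IsSFiniteKernel κ] {f : α → β → ℝ≥0∞}
    (hf : Measurable (Function.uncurry f)) :
    Measurable (Function.uncurry (normalizedDensity κ f)) := by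
  have hZ : Measurable fun a => ∫⁻ b, f a b ∂κ a := hf.lintegral_kernel_prod_right
  have hpos : MeasurableSet {a | 0 < ∫⁻ b, f a b ∂κ a ∧ ∫⁻ b, f a b ∂κ a ≠ ∞} :=
    (measurableSet_lt measurable_const hZ).inter (hZ (measurableSet_singleton ∞).compl)
  exact Measurable.ite (measurable_fst hpos) (hf.div (hZ.comp measurable_fst)) measurable_const

lemma lintegral_normalizedDensity (κ : Kernel α β) [IsMarkovKernel κ] {f : α → β → ℝ≥0∞} {a : α}
    (hf : Measurable (f a)) : ∫⁻ b, normalizedDensity κ f a b ∂κ a = 1 := by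
  by_cases ha : 0 < ∫⁻ b, f a b ∂κ a ∧ ∫⁻ b, f a b ∂κ a ≠ ∞
  · simp only [normalizedDensity, if_pos ha, div_eq_mul_inv]
    rw [lintegral_mul_const _ hf, ENNReal.mul_inv_cancel ha.1.ne' ha.2]
  · simp only [normalizedDensity, if_neg ha, lintegral_const, measure_univ, mul_one]

lemma isMarkovKernel_withDensity_normalizedDensity (κ : Kernel α β) [IsMarkovKernel κ]
    {f : α → β → ℝ≥0∞} (hf : Measurable (Function.uncurry f)) :
    IsMarkovKernel (κ.withDensity (normalizedDensity κ f)) where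
  isProbabilityMeasure a := ⟨by
    rw [Kernel.withDensity_apply' κ (measurable_normalizedDensity hf), setLIntegral_univ,
      lintegral_normalizedDensity κ hf.of_uncurry_left]⟩

lemma ae_eq_lintegral_mul_normalizedDensity {κ : Kernel α β} {f : α → β → ℝ≥0∞} {a : α}
    (hf : Measurable (f a)) (ha : ∫⁻ b, f a b ∂κ a ≠ ∞) :
    ∀ᵐ b ∂κ a, f a b = (∫⁻ b', f a b' ∂κ a) * normalizedDensity κ f a b := by
  rcases eq_or_ne (∫⁻ b, f a b ∂κ a) 0 with h0 | h0
  · filter_upwards [(lintegral_eq_zero_iff hf).1 h0] with b hb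
    rw [h0, zero_mul, hb, Pi.zero_apply]
  · refine ae_of_all _ fun b => ?_
    rw [normalizedDensity, if_pos ⟨pos_iff_ne_zero.2 h0, ha⟩, ENNReal.mul_div_cancel h0 ha]

lemma withDensity_compProd {m : Measure α} [SFinite m] {κ : Kernel α β} [IsSFiniteKernel κ]
    {h : α → ℝ≥0∞} (hh : Measurable h) :
    m.withDensity h ⊗ₘ κ = (m ⊗ₘ κ).withDensity fun p => h p.1 := by
  refine Measure.ext_of_lintegral _ fun F hF => ?_
  rw [Measure.lintegral_compProd hF,
    lintegral_withDensity_eq_lintegral_mul _ hh hF.lintegral_kernel_prod_right',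
    lintegral_withDensity_eq_lintegral_mul _ (by fun_prop) hF,
    Measure.lintegral_compProd (by fun_prop)]
  exact lintegral_congr fun a => (lintegral_const_mul _ (by fun_prop)).symm

lemma compProd_withDensity_eq_compProd_normalizedDensity {m : Measure α} [SFinite m]
    {κ : Kernel α β} [IsMarkovKernel κ] {f : α → β → ℝ≥0∞} (hf : Measurable (Function.uncurry f))
    (hfin : ∀ᵐ a ∂m, ∫⁻ b, f a b ∂κ a ≠ ∞) :
    (m ⊗ₘ κ).withDensity (Function.uncurry f) =
      m.withDensity (fun a => ∫⁻ b, f a b ∂κ a) ⊗ₘ κ.withDensity (normalizedDensity κ f) := by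
  have hZ : Measurable fun a => ∫⁻ b, f a b ∂κ a := hf.lintegral_kernel_prod_right
  have hn := measurable_normalizedDensity (κ := κ) hf
  have := isMarkovKernel_withDensity_normalizedDensity κ hf
  have hmul : ∀ᵐ p ∂m ⊗ₘ κ,
      Function.uncurry f p = (∫⁻ b, f p.1 b ∂κ p.1) * normalizedDensity κ f p.1 p.2 := by
    refine (Measure.ae_compProd_iff
      (measurableSet_eq_fun hf ((hZ.comp measurable_fst).mul hn))).2 ?_
    filter_upwards [hfin] with a ha
    exact ae_eq_lintegral_mul_normalizedDensity hf.of_uncurry_left ha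
  rw [Measure.compProd_withDensity hn, withDensity_compProd hZ, withDensity_congr_ae hmul]
  exact withDensity_mul _ (hZ.comp measurable_fst) hn

lemma ae_lintegral_ne_top_of_isFiniteMeasure_compProd_withDensity {m : Measure α} [SFinite m]
    {κ : Kernel α β} [IsSFiniteKernel κ] {f : α → β → ℝ≥0∞} (hf : Measurable (Function.uncurry f))
    [IsFiniteMeasure ((m ⊗ₘ κ).withDensity (Function.uncurry f))] :
    ∀ᵐ a ∂m, ∫⁻ b, f a b ∂κ a ≠ ∞ := by
  have htotal : ∫⁻ a, ∫⁻ b, f a b ∂κ a ∂m ≠ ∞ := by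
    have := measure_ne_top ((m ⊗ₘ κ).withDensity (Function.uncurry f)) Set.univ
    rwa [withDensity_apply _ .univ, setLIntegral_univ, Measure.lintegral_compProd hf] at this
  filter_upwards [ae_lt_top hf.lintegral_kernel_prod_right htotal] with a ha using ha.ne

theorem condDistrib_ae_eq_withDensity_div {Ω : Type*} [MeasurableSpace Ω]
    [StandardBorelSpace β] [Nonempty β] {P : Measure Ω} [IsFiniteMeasure P] {V : Ω → α} {X : Ω → β}
    (hX : AEMeasurable X P) {m : Measure α} [SFinite m] {κ : Kernel α β}
    [IsMarkovKernel κ] {f : α → β → ℝ≥0∞} (hf : Measurable (Function.uncurry f))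
    (hlaw : P.map (fun ω => (V ω, X ω)) = (m ⊗ₘ κ).withDensity (Function.uncurry f)) :
    ∀ᵐ a ∂P.map V, (0 < ∫⁻ b, f a b ∂κ a ∧ ∫⁻ b, f a b ∂κ a ≠ ∞) ∧
      condDistrib X V P a = (κ a).withDensity (fun b => f a b / ∫⁻ b', f a b' ∂κ a) := by
  have hn := measurable_normalizedDensity (κ := κ) hf
  have := isMarkovKernel_withDensity_normalizedDensity κ hf
  have : IsFiniteMeasure ((m ⊗ₘ κ).withDensity (Function.uncurry f)) := hlaw ▸ inferInstance
  have hfin := ae_lintegral_ne_top_of_isFiniteMeasure_compProd_withDensity (m := m) (κ := κ) hf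
  have hsplit := hlaw.trans (compProd_withDensity_eq_compProd_normalizedDensity hf hfin)
  have hmarginal : P.map V = m.withDensity (fun a => ∫⁻ b, f a b ∂κ a) := by
    rw [← Measure.fst_map_prodMk₀ hX, hsplit, Measure.fst_compProd]
  have hmass : ∀ᵐ a ∂P.map V, 0 < ∫⁻ b, f a b ∂κ a ∧ ∫⁻ b, f a b ∂κ a ≠ ∞ := by
    rw [hmarginal, ae_withDensity_iff hf.lintegral_kernel_prod_right]
    filter_upwards [hfin] with a ha h0 using ⟨pos_iff_ne_zero.2 h0, ha⟩
  rw [← hmarginal] at hsplit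
  filter_upwards [hmass, condDistrib_ae_eq_of_measure_eq_compProd V hX hsplit] with a ha hcond
  refine ⟨ha, ?_⟩
  rw [hcond, Kernel.withDensity_apply κ hn]
  exact congrArg (κ a).withDensity (funext fun b => if_pos ha)

end Disintegration

section JointLaw

variable {S T U : Type*} [MeasurableSpace S] [MeasurableSpace T] [MeasurableSpace U]

lemma compProd_eq_prod_withDensity {μ : Measure S} [SFinite μ] {κ : Kernel S T} [IsSFiniteKernel κ]
    {ν : Measure T} [SFinite ν] {g : S × T → ℝ≥0∞} (hg : Measurable g)
    (hκ : ∀ᵐ s ∂μ, κ s = ν.withDensity (fun t => g (s, t))) :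
    μ ⊗ₘ κ = (μ.prod ν).withDensity g := by
  refine Measure.ext_of_lintegral _ fun F hF => ?_
  rw [Measure.lintegral_compProd hF, lintegral_withDensity_eq_lintegral_mul _ hg hF,
    lintegral_prod _ (by fun_prop)]
  refine lintegral_congr_ae ?_
  filter_upwards [hκ] with s hs
  rw [hs, lintegral_withDensity_eq_lintegral_mul _ (by fun_prop) (by fun_prop)]
  rfl

lemma map_withDensity_comp_s12 {μ : Measure S} {φ : S → T} (hφ : Measurable φ) {h : T → ℝ≥0∞}
    (hh : Measurable h) : (μ.withDensity (h ∘ φ)).map φ = (μ.map φ).withDensity h := by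
  ext s hs
  rw [Measure.map_apply hφ hs, withDensity_apply _ (hφ hs), withDensity_apply _ hs,
    setLIntegral_map hs hh hφ]
  rfl

lemma map_prod_map_swap_compProd {μ : Measure U} [SFinite μ] {κ : Kernel U S} [IsSFiniteKernel κ]
    {ν : Measure T} [SFinite ν] :
    (((μ ⊗ₘ κ).map Prod.swap).prod ν).map (fun p => ((p.2, p.1.2), p.1.1)) =
      ν.prod μ ⊗ₘ κ.prodMkLeft T := by
  refine Measure.ext_of_lintegral _ fun F hF => ?_
  rw [lintegral_map hF (by fun_prop), lintegral_prod_symm' _ (by fun_prop),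
    Measure.lintegral_compProd hF, lintegral_prod _ hF.lintegral_kernel_prod_right'.aemeasurable]
  refine lintegral_congr fun y => ?_
  rw [lintegral_map (by fun_prop) measurable_swap, Measure.lintegral_compProd (by fun_prop)]
  rfl

variable {Ω : Type*} [MeasurableSpace Ω] [StandardBorelSpace S] [Nonempty S]
  [StandardBorelSpace T] [Nonempty T] {P : Measure Ω} [IsFiniteMeasure P]
  {X : Ω → S} {Y : Ω → T} {W : Ω → U}

lemma map_prodMk_eq_compProd_condDistrib_withDensity (hX : AEMeasurable X P)
    (hY : AEMeasurable Y P) (hW : AEMeasurable W P) {ν : Measure T} [SFinite ν]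
    {g : S × T → ℝ≥0∞} (hg : Measurable g)
    (hlik : ∀ᵐ p ∂P.map (fun ω => (X ω, W ω)),
      condDistrib Y (fun ω => (X ω, W ω)) P p = ν.withDensity (fun y => g (p.1, y))) :
    P.map (fun ω => ((Y ω, W ω), X ω)) =
      (ν.prod (P.map W) ⊗ₘ (condDistrib X W P).prodMkLeft T).withDensity
        (Function.uncurry fun q x => g (x, q.1)) := by
  let φ : (S × U) × T → (T × U) × S := fun p => ((p.2, p.1.2), p.1.1)
  let h : (T × U) × S → ℝ≥0∞ := Function.uncurry fun q x => g (x, q.1)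
  have hφ : Measurable φ := by fun_prop
  have hh : Measurable h := by fun_prop
  have hXW : P.map (fun ω => (X ω, W ω)) = (P.map W ⊗ₘ condDistrib X W P).map Prod.swap := by
    rw [compProd_map_condDistrib hX,
      AEMeasurable.map_map_of_aemeasurable measurable_swap.aemeasurable (hW.prodMk hX)]
    rfl
  have hXWY : P.map (fun ω => ((X ω, W ω), Y ω)) =
      ((P.map fun ω => (X ω, W ω)).prod ν).withDensity (h ∘ φ) := by
    rw [← compProd_map_condDistrib hY]
    exact compProd_eq_prod_withDensity (hh.comp hφ) hlik
  calc P.map (fun ω => ((Y ω, W ω), X ω))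
      = (P.map fun ω => ((X ω, W ω), Y ω)).map φ :=
        (AEMeasurable.map_map_of_aemeasurable hφ.aemeasurable ((hX.prodMk hW).prodMk hY)).symm
    _ = (((P.map fun ω => (X ω, W ω)).prod ν).map φ).withDensity h := by
        rw [hXWY, map_withDensity_comp_s12 hφ hh]
    _ = (ν.prod (P.map W) ⊗ₘ (condDistrib X W P).prodMkLeft T).withDensity h := by
        rw [hXW, map_prod_map_swap_compProd]

theorem conditional_bayes_rule_general (hX : AEMeasurable X P) (hY : AEMeasurable Y P)
    (hW : AEMeasurable W P) {ν : Measure T} [SFinite ν] {g : S × T → ℝ≥0∞} (hg : Measurable g)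
    (hlik : ∀ᵐ p ∂P.map (fun ω => (X ω, W ω)),
      condDistrib Y (fun ω => (X ω, W ω)) P p = ν.withDensity (fun y => g (p.1, y))) :
    ∀ᵐ q ∂P.map (fun ω => (Y ω, W ω)),
      (0 < ∫⁻ x, g (x, q.1) ∂condDistrib X W P q.2 ∧
        ∫⁻ x, g (x, q.1) ∂condDistrib X W P q.2 ≠ ∞) ∧
        condDistrib X (fun ω => (Y ω, W ω)) P q =
          (condDistrib X W P q.2).withDensity
            (fun x => g (x, q.1) / ∫⁻ x', g (x', q.1) ∂condDistrib X W P q.2) :=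
  condDistrib_ae_eq_withDensity_div hX (by fun_prop)
    (map_prodMk_eq_compProd_condDistrib_withDensity hX hY hW hg hlik)

end JointLaw

/-- **Conditional Bayes rule (filtering analysis step).** If the conditional law of `Y` given
`(X, W) = (x, w)` has density `g (x, ·)` with respect to a σ-finite measure `ν`, not depending
on `w`, then for almost every `(y, w)` with
`0 < ∫ g (x, y) d[condDistrib X W P (w)](x) < ∞`, the conditional law of `X` given
`(Y, W) = (y, w)` has density `x ↦ g (x, y) / ∫ g (x', y) d[condDistrib X W P (w)](x')` with
respect to the conditional law of `X` given `W = w`. -/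
theorem conditional_bayes_rule
    {Ω S T U : Type*}
    [MeasurableSpace Ω]
    [MeasurableSpace S] [StandardBorelSpace S] [Nonempty S]
    [MeasurableSpace T] [StandardBorelSpace T] [Nonempty T]
    [MeasurableSpace U] [StandardBorelSpace U] [Nonempty U]
    (P : Measure Ω) [IsProbabilityMeasure P]
    (X : Ω → S) (Y : Ω → T) (W : Ω → U)
    (hX : Measurable X) (hY : Measurable Y) (hW : Measurable W)
    (ν : Measure T) [SigmaFinite ν]
    (g : S × T → ℝ≥0∞) (hg : Measurable g)
    (hlik : ∀ᵐ p ∂(P.map (fun ω => (X ω, W ω))),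
      condDistrib Y (fun ω => (X ω, W ω)) P p = ν.withDensity (fun y => g (p.1, y))) :
    ∀ᵐ q ∂(P.map (fun ω => (Y ω, W ω))),
      (0 < ∫⁻ x, g (x, q.1) ∂(condDistrib X W P q.2) ∧
        ∫⁻ x, g (x, q.1) ∂(condDistrib X W P q.2) ≠ ⊤) →
        condDistrib X (fun ω => (Y ω, W ω)) P q =
          (condDistrib X W P q.2).withDensity
            (fun x => g (x, q.1) / ∫⁻ x', g (x', q.1) ∂(condDistrib X W P q.2)) := by
  filter_upwards [conditional_bayes_rule_general hX.aemeasurable hY.aemeasurable hW.aemeasurable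
    hg hlik] with q hq _ using hq.2
end
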